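/- If X ⊆ 𝒜^∞ is a d̄_M-stable shift space, then d̄_M^H(M_σ(X^M_n), M_σ(X)) → 0 as n → ∞, where X^M_n is the n-th Markov approximation of X. -/

import Mathlib

open MeasureTheory Filter Topology

namespace DbarPaper

variable {A : Type} [Fintype A] [DecidableEq A] [Inhabited A]
  [TopologicalSpace A] [DiscreteTopology A]
  [MeasurableSpace A] [MeasurableSingletonClass A]

/-- The shift map on the full shift `𝒜^∞ = ℕ → A`. -/
def shift : (ℕ → A) → (ℕ → A) := fun x n => x (n + 1)

/-- A shift space: a nonempty, closed, shift-invariant subset of the full shift. -/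
def ShiftSpace (X : Set (ℕ → A)) : Prop :=
  X.Nonempty ∧ IsClosed X ∧ ∀ x ∈ X, shift x ∈ X

/-- The word `w` appears in the sequence `x`. -/
def occursIn (w : List A) (x : ℕ → A) : Prop :=
  ∃ i : ℕ, w = List.ofFn (fun k : Fin w.length => x (i + (k : ℕ)))

/-- The language of a set `X`: all finite words appearing in points of `X`. -/
def lang (X : Set (ℕ → A)) : Set (List A) := {w | ∃ x ∈ X, occursIn w x}

/-- Words of length `n` in the language of `X`. -/
def langN (n : ℕ) (X : Set (ℕ → A)) : Set (List A) := {w | w ∈ lang X ∧ w.length = n}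

/-- The pseudometric `d̄` on the full shift. -/
noncomputable def dbar (x y : ℕ → A) : ℝ :=
  Filter.limsup
    (fun n => (((Finset.range n).filter (fun j => x j ≠ y j)).card : ℝ) / (n : ℝ))
    Filter.atTop

/-- Hausdorff "distance" between two sets induced by a `ℝ`-valued distance. -/
noncomputable def hausdist {Z : Type*} (d : Z → Z → ℝ) (P Q : Set Z) : ℝ :=
  max (⨆ p : P, ⨅ q : Q, d p q) (⨆ q : Q, ⨅ p : P, d p q)

/-- A probability measure is shift-invariant. -/
def invariantPM (μ : ProbabilityMeasure (ℕ → A)) : Prop :=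
  (μ : Measure (ℕ → A)).map shift = (μ : Measure (ℕ → A))

/-- `M_σ(X)`: shift-invariant Borel probability measures giving `X` full measure. -/
def Msigma (X : Set (ℕ → A)) : Set (ProbabilityMeasure (ℕ → A)) :=
  {μ | invariantPM μ ∧ μ X = 1}

/-- `ξ` is a joining of `μ` and `ν`: a `σ×σ`-invariant measure on the product with
marginals `μ` and `ν`. -/
def IsJoining (ξ : Measure ((ℕ → A) × (ℕ → A))) (μ ν : ProbabilityMeasure (ℕ → A)) : Prop :=
  ξ.map (Prod.map shift shift) = ξ ∧
  ξ.map Prod.fst = (μ : Measure (ℕ → A)) ∧ ξ.map Prod.snd = (ν : Measure (ℕ → A))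

/-- Ornstein's metric `d̄_M` on invariant measures. -/
noncomputable def dbarM (μ ν : ProbabilityMeasure (ℕ → A)) : ℝ :=
  sInf {r : ℝ | ∃ ξ : Measure ((ℕ → A) × (ℕ → A)),
    IsJoining ξ μ ν ∧ r = (ξ {p | p.1 0 ≠ p.2 0}).toReal}

/-- `d̄_M`-stability of a shift space (Austin). -/
def DbarMStable (X : Set (ℕ → A)) : Prop :=
  ∀ ε : ℝ, 0 < ε → ∃ U : Set (ProbabilityMeasure (ℕ → A)), IsOpen U ∧ Msigma X ⊆ U ∧
    ∀ ν ∈ U, invariantPM ν → ∃ μ ∈ Msigma X, dbarM μ ν < ε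

/-- The infinite concatenation of a sequence of (nonempty) words. -/
def concatSeq (w : ℕ → List A) : ℕ → A := fun n =>
  ((List.ofFn (fun i : Fin (n + 1) => w (i : ℕ))).flatten).getD n default

/-- The `d̄`-shadowing property. -/
def DbarShadowing (X : Set (ℕ → A)) : Prop :=
  ∀ ε : ℝ, 0 < ε → ∃ N : ℕ, 0 < N ∧ ∀ w : ℕ → List A,
    (∀ j, w j ∈ lang X) → (∀ j, N ≤ (w j).length) →
    ∃ x' ∈ X, dbar (concatSeq w) x' < ε

/-- `U_n(X)`: the union of cylinders of words of length `n` in the language of `X`. -/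
def cylNbhd (X : Set (ℕ → A)) (n : ℕ) : Set (ℕ → A) :=
  {x | List.ofFn (fun k : Fin n => x (k : ℕ)) ∈ lang X}

/-- The `n`-th (topological) Markov approximation of `X`: all sequences whose subwords of
length `n+1` belong to the language of `X`. -/
def markovApprox (X : Set (ℕ → A)) (n : ℕ) : Set (ℕ → A) :=
  {x | ∀ i : ℕ, List.ofFn (fun k : Fin (n + 1) => x (i + (k : ℕ))) ∈ lang X}

/-- Transitivity, in terms of the language. -/
def TransitiveShift (X : Set (ℕ → A)) : Prop :=
  ∀ u ∈ lang X, ∀ w ∈ lang X, ∃ v : List A, u ++ v ++ w ∈ lang X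

/-- Topological mixing, in terms of the language. -/
def MixingShift (X : Set (ℕ → A)) : Prop :=
  ∀ u ∈ lang X, ∀ w ∈ lang X, ∃ N : ℕ, ∀ m : ℕ, N ≤ m →
    ∃ v : List A, v.length = m ∧ u ++ v ++ w ∈ lang X

/-- Chain mixing: all but finitely many Markov approximations are topologically mixing. -/
def ChainMixing (X : Set (ℕ → A)) : Prop :=
  ∃ N : ℕ, ∀ n : ℕ, N ≤ n → MixingShift (markovApprox X n)

/-- `C` is the measure center of `X`: the smallest shift space contained in `X` of full
measure for every invariant measure of `X`. -/
def IsMeasureCenter (X C : Set (ℕ → A)) : Prop :=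
  ShiftSpace C ∧ C ⊆ X ∧ (∀ μ ∈ Msigma X, μ C = 1) ∧
  ∀ Y : Set (ℕ → A), ShiftSpace Y → Y ⊆ X → (∀ μ ∈ Msigma X, μ Y = 1) → C ⊆ Y

/-- Measure of the cylinder determined by a word of length `n`. -/
noncomputable def cylMeasure (μ : ProbabilityMeasure (ℕ → A)) {n : ℕ} (w : Fin n → A) : ℝ :=
  ((μ : Measure (ℕ → A)) {x | ∀ k : Fin n, x (k : ℕ) = w k}).toReal

/-- Entropy of the partition into cylinders of length `n`. -/
noncomputable def blockEntropy (μ : ProbabilityMeasure (ℕ → A)) (n : ℕ) : ℝ :=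
  -∑ w : Fin n → A, cylMeasure μ w * Real.log (cylMeasure μ w)

/-- Kolmogorov–Sinai entropy of a shift-invariant measure. -/
noncomputable def ksEntropy (μ : ProbabilityMeasure (ℕ → A)) : ℝ :=
  Filter.limsup (fun n => blockEntropy μ n / (n : ℝ)) Filter.atTop

/-- `μ` is ergodic for the shift. -/
def ErgodicPM (μ : ProbabilityMeasure (ℕ → A)) : Prop :=
  Ergodic shift (μ : Measure (ℕ → A))

/-- Ergodic measures are entropy dense in `M_σ(X)`. -/
def EntropyDense (X : Set (ℕ → A)) : Prop :=
  ∀ μ ∈ Msigma X, ∀ U : Set (ProbabilityMeasure (ℕ → A)), IsOpen U → μ ∈ U →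
    ∀ ε : ℝ, 0 < ε →
      ∃ ν ∈ Msigma X, ν ∈ U ∧ ErgodicPM ν ∧ |ksEntropy ν - ksEntropy μ| < ε

/-- Topological entropy of a shift space. -/
noncomputable def topEntropy (X : Set (ℕ → A)) : ℝ :=
  Filter.limsup (fun n => Real.log (Nat.card ↥(langN n X)) / (n : ℝ)) Filter.atTop

/-- The standard metric on the full shift. -/
noncomputable def rho (x y : ℕ → A) : ℝ :=
  open scoped Classical in
  if x = y then 0 else (2 : ℝ) ^ (-((sInf {j : ℕ | x j ≠ y j} : ℕ) : ℤ))

/-- Proximality of a shift space. -/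
def ProximalShift (X : Set (ℕ → A)) : Prop :=
  ∀ x ∈ X, ∀ y ∈ X,
    Filter.liminf (fun n => rho (shift^[n] x) (shift^[n] y)) Filter.atTop = 0

/-- Minimality of a shift space. -/
def MinimalShift (X : Set (ℕ → A)) : Prop :=
  ShiftSpace X ∧ ∀ Y : Set (ℕ → A), ShiftSpace Y → Y ⊆ X → Y = X

/-- An `A`-labeled directed multigraph on vertices `V` with edges `E`. -/
structure LabeledGraph (A V E : Type*) where
  src : E → V
  dst : E → V
  lab : E → A

namespace LabeledGraph

variable {A' V E : Type*}

/-- `es` is a path in `G` from `u` to `v`. -/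
def PathFromTo (G : LabeledGraph A' V E) (es : List E) (u v : V) : Prop :=
  es.Chain' (fun e f => G.dst e = G.src f) ∧
  es.head?.map G.src = some u ∧ es.getLast?.map G.dst = some v

/-- `G` is strongly connected. -/
def StronglyConnected (G : LabeledGraph A' V E) : Prop :=
  ∀ u v : V, ∃ es : List E, G.PathFromTo es u v

/-- `d` is the period of `G`: the gcd of lengths of closed paths. -/
def HasPeriod (G : LabeledGraph A' V E) (d : ℕ) : Prop :=
  (∀ (es : List E) (u : V), G.PathFromTo es u u → d ∣ es.length) ∧
  ∀ d' : ℕ, (∀ (es : List E) (u : V), G.PathFromTo es u u → d' ∣ es.length) → d' ∣ d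

/-- `b` is a safe symbol for `G`. -/
def SafeSymbol (G : LabeledGraph A' V E) (b : A') : Prop :=
  ∀ e : E, ∃ e' : E, G.src e' = G.src e ∧ G.dst e' = G.dst e ∧ G.lab e' = b

/-- The shift space presented by the labeled graph `G`: labels read along infinite paths. -/
def presents (G : LabeledGraph A' V E) : Set (ℕ → A') :=
  {x | ∃ e : ℕ → E, (∀ j, G.dst (e j) = G.src (e (j + 1))) ∧ ∀ j, x j = G.lab (e j)}

end LabeledGraph

/-- The coupling of a family of labeled graphs: an edge labeled `a` from `v` to `v'` exists
iff each `G k` has an edge from `v k` to `v' k` labeled `a`. -/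
def coupling {A' : Type*} {n : ℕ} {V E : Fin n → Type*}
    (G : ∀ k, LabeledGraph A' (V k) (E k)) :
    LabeledGraph A' (∀ k, V k) {p : (∀ k, E k) × A' // ∀ k, (G k).lab (p.1 k) = p.2} where
  src p := fun k => (G k).src (p.1.1 k)
  dst p := fun k => (G k).dst (p.1.1 k)
  lab p := p.1.2

/-- Sofic shift spaces: those presented by some finite labeled graph. -/
def Sofic (X : Set (ℕ → A)) : Prop :=
  ∃ (V E : Type) (_ : Fintype V) (_ : Fintype E) (G : LabeledGraph A V E),
    X = G.presents

/-- The coded shift generated by a finite set of words `B`: the closure of the set of all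
shifts of infinite concatenations of words from `B`. -/
def codedShift (B : Finset (List A)) : Set (ℕ → A) :=
  closure {x | ∃ (b : ℕ → List A) (k : ℕ), (∀ i, b i ∈ B) ∧ x = shift^[k] (concatSeq b)}


/-!
By compactness of `M_σ(𝒜^∞)` the proof is a soft argument. The Markov approximations decrease to
`X`, so the weak* compact sets `M_σ(X^M_n)` decrease to `M_σ(X)` and are eventually contained in
any given neighborhood of `M_σ(X)`. On the neighborhood provided by stability every invariant
measure is `d̄_M`-close to `M_σ(X)`; in the other direction `M_σ(X) ⊆ M_σ(X^M_n)` for every `n`.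
-/

section Hausdist

variable {Z : Type*} {d : Z → Z → ℝ}

theorem hausdist_nonneg (hd : ∀ p q, 0 ≤ d p q) (P Q : Set Z) : 0 ≤ hausdist d P Q :=
  le_max_of_le_left (Real.iSup_nonneg fun _ => Real.iInf_nonneg fun _ => hd _ _)

theorem hausdist_le {P Q : Set Z} {ε : ℝ} (hd : ∀ p q, 0 ≤ d p q) (hε : 0 ≤ ε)
    (hP : ∀ p ∈ P, ∃ q ∈ Q, d p q ≤ ε) (hQ : ∀ q ∈ Q, ∃ p ∈ P, d p q ≤ ε) :
    hausdist d P Q ≤ ε := by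
  refine max_le (Real.iSup_le (fun p => ?_) hε) (Real.iSup_le (fun q => ?_) hε)
  · obtain ⟨q, hq, hpq⟩ := hP p p.2
    exact ciInf_le_of_le ⟨0, Set.forall_mem_range.2 fun _ => hd _ _⟩ (⟨q, hq⟩ : Q) hpq
  · obtain ⟨p, hp, hpq⟩ := hQ q q.2
    exact ciInf_le_of_le ⟨0, Set.forall_mem_range.2 fun _ => hd _ _⟩ (⟨p, hp⟩ : P) hpq

theorem tendsto_hausdist_zero {ι : Type*} {l : Filter ι} {P Q : ι → Set Z}
    (hd : ∀ p q, 0 ≤ d p q)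
    (h : ∀ ε > 0, ∀ᶠ i in l,
      (∀ p ∈ P i, ∃ q ∈ Q i, d p q ≤ ε) ∧ ∀ q ∈ Q i, ∃ p ∈ P i, d p q ≤ ε) :
    Tendsto (fun i => hausdist d (P i) (Q i)) l (𝓝 0) := by
  refine tendsto_order.2 ⟨fun a ha => Eventually.of_forall fun i =>
    ha.trans_le (hausdist_nonneg hd _ _), fun ε hε => ?_⟩
  filter_upwards [h (ε / 2) (half_pos hε)] with i hi
  exact (hausdist_le hd (half_pos hε).le hi.1 hi.2).trans_lt (half_lt_self hε)

end Hausdist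

section Shift

variable {α : Type}

theorem iterate_shift_apply (i k : ℕ) (x : ℕ → α) : shift^[i] x k = x (i + k) := by
  induction i generalizing x with
  | zero => rw [Function.iterate_zero_apply, Nat.zero_add]
  | succ i ih => rw [Function.iterate_succ_apply, ih, shift, Nat.add_right_comm]

theorem continuous_shift [TopologicalSpace α] : Continuous (shift : (ℕ → α) → ℕ → α) :=
  continuous_pi fun n => continuous_apply (n + 1)

theorem measurable_shift [MeasurableSpace α] : Measurable (shift : (ℕ → α) → ℕ → α) :=
  measurable_pi_lambda _ fun n => measurable_pi_apply (n + 1)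

end Shift

section MarkovApprox

variable {α : Type} {X : Set (ℕ → α)}

theorem ofFn_mem_lang {x : ℕ → α} (hx : x ∈ X) (i n : ℕ) :
    List.ofFn (fun k : Fin n => x (i + (k : ℕ))) ∈ lang X :=
  ⟨x, hx, i, List.ext_getElem (by simp) (by simp)⟩

theorem exists_mem_prefix_of_ofFn_mem_lang (hX : Set.MapsTo shift X X) {n : ℕ} {w : Fin n → α}
    (hw : List.ofFn w ∈ lang X) : ∃ y ∈ X, ∀ k : Fin n, y k = w k := by
  obtain ⟨x, hx, i, hi⟩ := hw
  refine ⟨shift^[i] x, hX.iterate i hx, fun k => ?_⟩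
  have hget := congrArg (fun l : List α => l[(k : ℕ)]?) hi
  simpa [iterate_shift_apply] using hget.symm

theorem subset_markovApprox (X : Set (ℕ → α)) (n : ℕ) : X ⊆ markovApprox X n :=
  fun _ hx i => ofFn_mem_lang hx i (n + 1)

theorem exists_mem_eq_of_mem_markovApprox (hX : Set.MapsTo shift X X) {n : ℕ} {x : ℕ → α}
    (hx : x ∈ markovApprox X n) (i : ℕ) : ∃ y ∈ X, ∀ k ≤ n, y k = x (i + k) := by
  obtain ⟨y, hy, hyx⟩ := exists_mem_prefix_of_ofFn_mem_lang hX (hx i)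
  exact ⟨y, hy, fun k hk => hyx ⟨k, Nat.lt_succ_of_le hk⟩⟩

theorem antitone_markovApprox (hX : Set.MapsTo shift X X) : Antitone (markovApprox X) := by
  intro m n hmn x hx i
  obtain ⟨y, hy, hyx⟩ := exists_mem_eq_of_mem_markovApprox hX hx i
  convert ofFn_mem_lang hy 0 (m + 1) using 2
  funext k
  rw [Nat.zero_add, hyx k (by omega)]

theorem iInter_markovApprox [TopologicalSpace α] (hXc : IsClosed X)
    (hX : Set.MapsTo shift X X) : ⋂ n, markovApprox X n = X := by
  refine Set.Subset.antisymm (fun x hx => ?_) (Set.subset_iInter (subset_markovApprox X))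
  choose y hy hyx using fun n => exists_mem_eq_of_mem_markovApprox hX (Set.mem_iInter.1 hx n) 0
  have hlim : Tendsto y atTop (𝓝 x) := by
    refine tendsto_pi_nhds.2 fun k => tendsto_const_nhds.congr' ?_
    filter_upwards [eventually_ge_atTop k] with n hn
    rw [hyx n k hn, Nat.zero_add]
  exact hXc.mem_of_tendsto hlim (Eventually.of_forall hy)

theorem isClosed_markovApprox [TopologicalSpace α] [DiscreteTopology α] (X : Set (ℕ → α))
    (n : ℕ) : IsClosed (markovApprox X n) := by
  simp only [markovApprox, Set.ofPred_forall]
  have hword (i : ℕ) : Continuous fun (x : ℕ → α) (k : Fin (n + 1)) => x (i + (k : ℕ)) :=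
    continuous_pi fun k => continuous_apply (i + (k : ℕ))
  exact isClosed_iInter fun i => (isClosed_discrete {w | List.ofFn w ∈ lang X}).preimage (hword i)

end MarkovApprox

section WeakTopology

variable {Ω : Type*} [TopologicalSpace Ω] [MeasurableSpace Ω]

theorem upperSemicontinuous_measure_of_isClosed [OpensMeasurableSpace Ω] [HasOuterApproxClosed Ω]
    {F : Set Ω} (hF : IsClosed F) :
    UpperSemicontinuous fun μ : ProbabilityMeasure Ω => (μ : Measure Ω) F := by
  refine upperSemicontinuous_iff_limsup_le.2 fun μ => ?_
  exact ProbabilityMeasure.limsup_measure_closed_le_of_tendsto tendsto_id hF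

theorem isClosed_setOf_map_eq_self [BorelSpace Ω] [HasOuterApproxClosed Ω] {T : Ω → Ω}
    (hT : Continuous T) :
    IsClosed {μ : ProbabilityMeasure Ω | (μ : Measure Ω).map T = (μ : Measure Ω)} := by
  have hfixed : {μ : ProbabilityMeasure Ω | (μ : Measure Ω).map T = (μ : Measure Ω)} =
      {μ | μ.map hT.measurable.aemeasurable = μ} := by
    ext μ
    exact Subtype.coe_inj (a := μ.map hT.measurable.aemeasurable)
  rw [hfixed]
  exact isClosed_eq (ProbabilityMeasure.continuous_map hT) continuous_id

end WeakTopology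

section Msigma

variable {α : Type} [MeasurableSpace α]

theorem Msigma_mono {F G : Set (ℕ → α)} (h : F ⊆ G) : Msigma F ⊆ Msigma G :=
  fun μ hμ => ⟨hμ.1, (μ.apply_le_one G).antisymm (hμ.2 ▸ μ.apply_mono h)⟩

theorem mem_Msigma_iff_measure_eq_one {F : Set (ℕ → α)} {μ : ProbabilityMeasure (ℕ → α)} :
    μ ∈ Msigma F ↔ invariantPM μ ∧ (μ : Measure (ℕ → α)) F = 1 := by
  rw [← ProbabilityMeasure.ennreal_coeFn_eq_coeFn_toMeasure, ENNReal.coe_eq_one]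
  rfl

theorem mem_Msigma_iff_ae {F : Set (ℕ → α)} (hF : MeasurableSet F)
    {μ : ProbabilityMeasure (ℕ → α)} :
    μ ∈ Msigma F ↔ invariantPM μ ∧ ∀ᵐ x ∂(μ : Measure (ℕ → α)), x ∈ F :=
  mem_Msigma_iff_measure_eq_one.trans (and_congr_right' (mem_ae_iff_prob_eq_one hF).symm)

theorem Msigma_iInter {ι : Type*} [Countable ι] [Nonempty ι] {F : ι → Set (ℕ → α)}
    (hF : ∀ i, MeasurableSet (F i)) : Msigma (⋂ i, F i) = ⋂ i, Msigma (F i) := by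
  ext μ
  simp only [mem_Msigma_iff_ae (MeasurableSet.iInter hF), Set.mem_iInter,
    mem_Msigma_iff_ae (hF _), ae_all_iff, forall_and, forall_const]

theorem isClosed_Msigma [TopologicalSpace α] [TopologicalSpace.PseudoMetrizableSpace α]
    [SecondCountableTopology α] [BorelSpace α] {F : Set (ℕ → α)} (hF : IsClosed F) :
    IsClosed (Msigma F) := by
  have hfull : Msigma F = {μ | invariantPM μ} ∩
      (fun μ : ProbabilityMeasure (ℕ → α) => (μ : Measure (ℕ → α)) F) ⁻¹' Set.Ici 1 := by
    ext μ
    rw [mem_Msigma_iff_measure_eq_one, ← one_le_prob_iff]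
    rfl
  rw [hfull]
  exact (isClosed_setOf_map_eq_self continuous_shift).inter
    ((upperSemicontinuous_measure_of_isClosed hF).isClosed_preimage 1)

theorem eventually_Msigma_subset_of_antitone [TopologicalSpace α] [CompactSpace α] [T2Space α]
    [SecondCountableTopology α] [BorelSpace α] {F : ℕ → Set (ℕ → α)} (hF : ∀ n, IsClosed (F n))
    (hanti : Antitone F) {U : Set (ProbabilityMeasure (ℕ → α))} (hU : IsOpen U)
    (hFU : Msigma (⋂ n, F n) ⊆ U) : ∀ᶠ n in atTop, Msigma (F n) ⊆ U := by
  have hManti : Antitone fun n => Msigma (F n) := fun _ _ hmn => Msigma_mono (hanti hmn)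
  rw [Msigma_iInter fun n => (hF n).measurableSet] at hFU
  obtain ⟨N, hN⟩ := exists_subset_nhds_of_compactSpace (directed_of_isDirected_le hManti)
    (fun n => isClosed_Msigma (hF n)) fun μ hμ => hU.mem_nhds (hFU hμ)
  filter_upwards [eventually_ge_atTop N] with n hn
  exact (hManti hn).trans hN

theorem eventually_Msigma_markovApprox_subset [Finite α] [TopologicalSpace α]
    [DiscreteTopology α] [MeasurableSingletonClass α] {X : Set (ℕ → α)} (hXc : IsClosed X)
    (hX : Set.MapsTo shift X X) {U : Set (ProbabilityMeasure (ℕ → α))} (hU : IsOpen U)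
    (hXU : Msigma X ⊆ U) : ∀ᶠ n in atTop, Msigma (markovApprox X n) ⊆ U :=
  eventually_Msigma_subset_of_antitone (isClosed_markovApprox X) (antitone_markovApprox hX) hU
    ((iInter_markovApprox hXc hX).symm ▸ hXU)

end Msigma

section Joining

variable {α : Type} [MeasurableSpace α] {μ ν : ProbabilityMeasure (ℕ → α)}
  {ξ : Measure ((ℕ → α) × (ℕ → α))}

theorem IsJoining.swap (h : IsJoining ξ μ ν) : IsJoining (ξ.map Prod.swap) ν μ := by
  obtain ⟨hinv, hfst, hsnd⟩ := h
  have hshift : Measurable (Prod.map shift shift : (ℕ → α) × (ℕ → α) → (ℕ → α) × (ℕ → α)) :=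
    measurable_shift.prodMap measurable_shift
  refine ⟨?_, ?_, ?_⟩
  · calc (ξ.map Prod.swap).map (Prod.map shift shift)
        = (ξ.map (Prod.map shift shift)).map Prod.swap := by
          rw [Measure.map_map hshift measurable_swap, Measure.map_map measurable_swap hshift]
          rfl
      _ = ξ.map Prod.swap := by rw [hinv]
  · exact (Measure.map_map measurable_fst measurable_swap).trans hsnd
  · exact (Measure.map_map measurable_snd measurable_swap).trans hfst

theorem dbarM_nonneg (μ ν : ProbabilityMeasure (ℕ → α)) : 0 ≤ dbarM μ ν := by
  refine Real.sInf_nonneg ?_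
  rintro _ ⟨ξ, -, rfl⟩
  exact ENNReal.toReal_nonneg

theorem IsJoining.dbarM_le (h : IsJoining ξ μ ν) :
    dbarM μ ν ≤ (ξ {p | p.1 0 ≠ p.2 0}).toReal := by
  refine csInf_le ⟨0, ?_⟩ ⟨ξ, h, rfl⟩
  rintro _ ⟨ξ, -, rfl⟩
  exact ENNReal.toReal_nonneg

theorem dbarM_comm (μ ν : ProbabilityMeasure (ℕ → α)) : dbarM μ ν = dbarM ν μ := by
  have hswap {μ ν : ProbabilityMeasure (ℕ → α)} {r : ℝ} :
      (∃ ξ, IsJoining ξ μ ν ∧ r = (ξ {p | p.1 0 ≠ p.2 0}).toReal) →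
        ∃ ξ, IsJoining ξ ν μ ∧ r = (ξ {p | p.1 0 ≠ p.2 0}).toReal := by
    rintro ⟨ξ, hξ, rfl⟩
    refine ⟨ξ.map Prod.swap, hξ.swap, congrArg ENNReal.toReal ?_⟩
    calc ξ {p | p.1 0 ≠ p.2 0} = ξ (Prod.swap ⁻¹' {p | p.1 0 ≠ p.2 0}) := by
          simp only [Set.preimage_ofPred_eq, Prod.fst_swap, Prod.snd_swap, ne_comm]
      _ = ξ.map Prod.swap {p | p.1 0 ≠ p.2 0} :=
          (MeasurableEquiv.prodComm.map_apply _).symm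
  exact congrArg sInf (Set.ext fun r => ⟨hswap, hswap⟩)

theorem isJoining_map_diagonal (hμ : invariantPM μ) :
    IsJoining ((μ : Measure (ℕ → α)).map fun x => (x, x)) μ μ := by
  have hdiag : Measurable fun x : ℕ → α => (x, x) := measurable_id.prodMk measurable_id
  refine ⟨?_, ?_, ?_⟩
  · calc ((μ : Measure (ℕ → α)).map fun x => (x, x)).map (Prod.map shift shift)
        = ((μ : Measure (ℕ → α)).map shift).map fun x => (x, x) := by
          rw [Measure.map_map (measurable_shift.prodMap measurable_shift) hdiag,
            Measure.map_map hdiag measurable_shift]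
          rfl
      _ = (μ : Measure (ℕ → α)).map fun x => (x, x) := by rw [hμ]
  · exact (Measure.map_map measurable_fst hdiag).trans Measure.map_id
  · exact (Measure.map_map measurable_snd hdiag).trans Measure.map_id

theorem dbarM_self [MeasurableEq α] (hμ : invariantPM μ) : dbarM μ μ = 0 := by
  have hne : MeasurableSet {p : (ℕ → α) × (ℕ → α) | p.1 0 ≠ p.2 0} :=
    (measurableSet_eq_fun (by fun_prop) (by fun_prop)).compl
  refine le_antisymm ((isJoining_map_diagonal hμ).dbarM_le.trans_eq ?_) (dbarM_nonneg μ μ)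
  rw [Measure.map_apply (by fun_prop) hne]
  simp

end Joining

/-- `d̄_M`-stability implies `d̄_M^H`-convergence of the simplices of invariant
measures of the Markov approximations. -/
theorem statement4 (hA : 2 ≤ Fintype.card A) (X : Set (ℕ → A)) (hX : ShiftSpace X)
    (hstab : DbarMStable X) :
    Filter.Tendsto (fun n => hausdist dbarM (Msigma (markovApprox X n)) (Msigma X))
      Filter.atTop (nhds 0) := by
  obtain ⟨-, hclosed, hshift⟩ := hX
  refine tendsto_hausdist_zero dbarM_nonneg fun ε hε => ?_
  obtain ⟨U, hU, hXU, hclose⟩ := hstab ε hε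
  filter_upwards [eventually_Msigma_markovApprox_subset hclosed hshift hU hXU] with n hn
  constructor
  · intro ν hν
    obtain ⟨μ, hμ, hμν⟩ := hclose ν (hn hν) hν.1
    exact ⟨μ, hμ, (dbarM_comm ν μ).trans_le hμν.le⟩
  · intro μ hμ
    exact ⟨μ, Msigma_mono (subset_markovApprox X n) hμ, (dbarM_self hμ.1).trans_le hε.le⟩

end DbarPaper
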